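/- Let r ∈ ℝ, T > 0 and p > 4. Then there exists a constant C = C(r,p,T) > 0 such that for all 0 ≤ s ≤ t ≤ T, sup_{x≥0} ( ∫_0^s [ ∫_0^∞ |G_r(t−u,x,z) − G_r(s−u,x,z)|² dz ]^{p/(p−2)} du )^{(p−2)/2} ≤ C |t−s|^{(p−4)/4}. -/

import Mathlib

/-!
Write `g t w = (4πt)^{-1/2} exp(-w²/(4t))`, so that `G t x z = g t (x - z) - g t (x + z)`, and put
`τ = s - u`, `δ = t - s`. The squared `L²` increment `F(τ)` of the weighted kernel between the times
`τ` and `τ + δ` satisfies, uniformly in `x ≥ 0`,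
`F(τ) ≤ M τ^{-1/2}` for all `τ`, and `F(τ) ≤ M τ^{-1/2} (δ/τ)²` for `δ ≤ τ`.

The first bound (`increment_le_small`) only uses `0 ≤ G t x z ≤ g t (x - z)`. The second
(`increment_le_large`) comes from the pointwise estimate `heat_increment`, where `y exp(-y) ≤ 1`
absorbs the factor `w²/t` produced by the time increment into half of the Gaussian exponent. In both,
the weight `exp(-2r(x - z))` is absorbed by completing the square, at the price of the factor
`exp(4r²T)` (`weighted_gaussian`).

With `q = p/(p-2) ∈ (1,2)` the function `τ ↦ τ^{-q/2} min(1, (δ/τ)^{2q})` is integrable on `(0,∞)`,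
with integral a constant times `δ^{1-q/2}`, and `(1 - q/2)(p-2)/2 = (p-4)/4`.
-/

open MeasureTheory Real Set Filter

/-- Dirichlet heat kernel on `[0,∞)`. -/
noncomputable def G (t x y : ℝ) : ℝ :=
  (Real.sqrt (4 * Real.pi * t))⁻¹ *
    (Real.exp (-(x - y) ^ 2 / (4 * t)) - Real.exp (-(x + y) ^ 2 / (4 * t)))

/-- Exponentially weighted kernel `G_r(t,x,y) = e^{-r(x-y)} G(t,x,y)`. -/
noncomputable def Gr (r t x y : ℝ) : ℝ := Real.exp (-r * (x - y)) * G t x y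

/-- Weighted sup norm `‖v‖_{L_r} = sup_{x ≥ 0} e^{-rx}|v(x)|`. -/
noncomputable def LrNorm (r : ℝ) (v : ℝ → ℝ) : ℝ :=
  sSup ((fun x => Real.exp (-r * x) * |v x|) '' Ici 0)

/-- Weighted sup norm `‖u‖_{C_r^T} = sup_{t ∈ [0,T]} sup_{x ≥ 0} e^{-rx}|u(t,x)|`. -/
noncomputable def CrNorm (r T : ℝ) (u : ℝ → ℝ → ℝ) : ℝ :=
  sSup ((fun q : ℝ × ℝ => Real.exp (-r * q.2) * |u q.1 q.2|) '' (Icc 0 T ×ˢ Ici 0))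

/-- `‖u‖_{C_r^T} < ∞`, expressed as boundedness of the weighted values. -/
def CrBdd (r T : ℝ) (u : ℝ → ℝ → ℝ) : Prop :=
  BddAbove ((fun q : ℝ × ℝ => Real.exp (-r * q.2) * |u q.1 q.2|) '' (Icc 0 T ×ˢ Ici 0))

/-- Gaussian integral with an exponential weight, by completing the square. -/
lemma weighted_gaussian (r t x : ℝ) (ht : 0 < t) :
    Integrable (fun z : ℝ => Real.exp (-2 * r * (x - z) - (x - z) ^ 2 / (4 * t))) ∧
    ∫ z : ℝ, Real.exp (-2 * r * (x - z) - (x - z) ^ 2 / (4 * t))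
      = Real.exp (4 * r ^ 2 * t) * Real.sqrt (4 * π * t) := by
  have e : (fun z : ℝ => Real.exp (-2 * r * (x - z) - (x - z) ^ 2 / (4 * t)))
      = fun z : ℝ => Real.exp (4 * r ^ 2 * t) *
        (fun y : ℝ => Real.exp (-(1 / (4 * t)) * y ^ 2)) ((x + 4 * r * t) - z) := by
    funext z
    simp only
    rw [← Real.exp_add]
    congr 1
    field_simp
    ring
  have hi : Integrable (fun y : ℝ => Real.exp (-(1 / (4 * t)) * y ^ 2)) :=
    integrable_exp_neg_mul_sq (by positivity)
  rw [e]
  refine ⟨(hi.comp_sub_left _).const_mul _, ?_⟩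
  rw [integral_const_mul, integral_sub_left_eq_self
    (fun y : ℝ => Real.exp (-(1 / (4 * t)) * y ^ 2)), integral_gaussian]
  congr 2
  field_simp

/-- A pointwise bound of the integrand by a weighted Gaussian integrates to a bound uniform
in `x`. -/
lemma setIntegral_le_of_gaussian (r t x T A : ℝ) (ht : 0 < t) (htT : t ≤ T) (hA : 0 ≤ A)
    (f : ℝ → ℝ) (hf0 : ∀ z, 0 ≤ f z)
    (hf : ∀ z > 0, f z ≤ A * Real.exp (-2 * r * (x - z) - (x - z) ^ 2 / (4 * t))) :
    ∫ z in Ioi (0:ℝ), f z ≤ A * (Real.exp (4 * r ^ 2 * T) * Real.sqrt (4 * π * t)) := by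
  obtain ⟨hi, hv⟩ := weighted_gaussian r t x ht
  calc ∫ z in Ioi (0:ℝ), f z
      ≤ ∫ z in Ioi (0:ℝ), A * Real.exp (-2 * r * (x - z) - (x - z) ^ 2 / (4 * t)) := by
        apply integral_mono_of_nonneg (Eventually.of_forall hf0) (hi.const_mul A).integrableOn
        filter_upwards [ae_restrict_mem measurableSet_Ioi] with z hz using hf z hz
    _ ≤ ∫ z, A * Real.exp (-2 * r * (x - z) - (x - z) ^ 2 / (4 * t)) :=
        setIntegral_le_integral (hi.const_mul A) (Eventually.of_forall fun z => by positivity)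
    _ = A * (Real.exp (4 * r ^ 2 * t) * Real.sqrt (4 * π * t)) := by
        rw [integral_const_mul, hv]
    _ ≤ _ := by gcongr

lemma G_bounds (t x z : ℝ) (ht : 0 < t) (hx : 0 ≤ x) (hz : 0 < z) :
    0 ≤ G t x z ∧
      G t x z ≤ (Real.sqrt (4 * π * t))⁻¹ * Real.exp (-(x - z) ^ 2 / (4 * t)) := by
  have h : Real.exp (-(x + z) ^ 2 / (4 * t)) ≤ Real.exp (-(x - z) ^ 2 / (4 * t)) := by
    apply Real.exp_le_exp.2
    apply div_le_div_of_nonneg_right _ (by positivity)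
    nlinarith [mul_nonneg hx hz.le]
  unfold G
  constructor
  · exact mul_nonneg (by positivity) (by linarith)
  · gcongr
    linarith [Real.exp_pos (-(x + z) ^ 2 / (4 * t))]

lemma Gr_sq_le (r t x z : ℝ) (ht : 0 < t) (hx : 0 ≤ x) (hz : 0 < z) :
    Gr r t x z ^ 2 ≤ (4 * π * t)⁻¹ *
      Real.exp (-2 * r * (x - z) - (x - z) ^ 2 / (4 * t)) := by
  obtain ⟨h0, h1⟩ := G_bounds t x z ht hx hz
  have hs : (Real.sqrt (4 * π * t))⁻¹ ^ 2 = (4 * π * t)⁻¹ := by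
    rw [inv_pow, Real.sq_sqrt (by positivity)]
  calc Gr r t x z ^ 2 = Real.exp (-r * (x - z)) ^ 2 * G t x z ^ 2 := by unfold Gr; ring
    _ ≤ Real.exp (-r * (x - z)) ^ 2 *
        ((Real.sqrt (4 * π * t))⁻¹ * Real.exp (-(x - z) ^ 2 / (4 * t))) ^ 2 := by gcongr
    _ = (4 * π * t)⁻¹ *
        (Real.exp (-r * (x - z)) ^ 2 * Real.exp (-(x - z) ^ 2 / (4 * t)) ^ 2) := by
        rw [mul_pow, hs]; ring
    _ ≤ _ := by
        gcongr
        rw [← Real.exp_nat_mul, ← Real.exp_nat_mul, ← Real.exp_add]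
        apply Real.exp_le_exp.2
        have : 0 ≤ (x - z) ^ 2 / (4 * t) := by positivity
        push_cast
        rw [neg_div]
        linarith

/-- Increment bound without decay in `δ / a`, used for `a ≤ δ`. -/
lemma increment_le_small (r T a δ x : ℝ) (ha : 0 < a) (hδ : 0 ≤ δ) (hT : a + δ ≤ T)
    (hx : 0 ≤ x) :
    ∫ z in Ioi (0:ℝ), |Gr r (a + δ) x z - Gr r a x z| ^ 2
      ≤ 72 * Real.exp (4 * r ^ 2 * T) * (Real.sqrt (4 * π * a))⁻¹ := by
  have hb : 0 < a + δ := by linarith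
  have hint : ∀ b, 0 < b → ∀ᵐ z ∂(volume.restrict (Ioi (0:ℝ))), Gr r b x z ^ 2 ≤
      (4 * π * b)⁻¹ * Real.exp (-2 * r * (x - z) - (x - z) ^ 2 / (4 * b)) := by
    intro b hb
    filter_upwards [ae_restrict_mem measurableSet_Ioi] with z hz using Gr_sq_le r b x z hb hx hz
  have hval : ∀ b, 0 < b → b ≤ T →
      ∫ z in Ioi (0:ℝ), (4 * π * b)⁻¹ * Real.exp (-2 * r * (x - z) - (x - z) ^ 2 / (4 * b))
        ≤ Real.exp (4 * r ^ 2 * T) * (Real.sqrt (4 * π * b))⁻¹ := by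
    intro b hb hbT
    refine (setIntegral_le_of_gaussian r b x T (4 * π * b)⁻¹ hb hbT (by positivity) _
      (fun z => by positivity) (fun z _ => le_rfl)).trans (le_of_eq ?_)
    have h1 : Real.sqrt (4 * π * b) ^ 2 = 4 * π * b := Real.sq_sqrt (by positivity)
    have h2 : 0 < Real.sqrt (4 * π * b) := by positivity
    rw [← h1, Real.sqrt_sq h2.le]
    field_simp
  have hi : ∀ b, 0 < b → IntegrableOn (fun z : ℝ => (4 * π * b)⁻¹ *
      Real.exp (-2 * r * (x - z) - (x - z) ^ 2 / (4 * b))) (Ioi 0) := fun b hb =>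
    ((weighted_gaussian r b x hb).1.const_mul _).integrableOn
  have key : ∫ z in Ioi (0:ℝ), |Gr r (a + δ) x z - Gr r a x z| ^ 2 ≤
      ∫ z in Ioi (0:ℝ),
        (2 * ((4 * π * (a + δ))⁻¹ *
          Real.exp (-2 * r * (x - z) - (x - z) ^ 2 / (4 * (a + δ)))) +
        2 * ((4 * π * a)⁻¹ * Real.exp (-2 * r * (x - z) - (x - z) ^ 2 / (4 * a)))) := by
    apply integral_mono_of_nonneg (Eventually.of_forall fun z => by positivity)
      (((hi _ hb).const_mul 2).add ((hi _ ha).const_mul 2))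
    filter_upwards [hint _ hb, hint _ ha] with z h1 h2
    simp only [sq_abs, Pi.add_apply]
    nlinarith [sq_nonneg (Gr r (a + δ) x z + Gr r a x z)]
  rw [integral_add ((hi _ hb).const_mul 2) ((hi _ ha).const_mul 2), integral_const_mul 2,
    integral_const_mul 2] at key
  have h1 := hval _ hb hT
  have h2 := hval _ ha (by linarith)
  have h3 : Real.exp (4 * r ^ 2 * T) * (Real.sqrt (4 * π * (a + δ)))⁻¹ ≤
      Real.exp (4 * r ^ 2 * T) * (Real.sqrt (4 * π * a))⁻¹ := by
    gcongr
    linarith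
  have h4 : 0 ≤ Real.exp (4 * r ^ 2 * T) * (Real.sqrt (4 * π * a))⁻¹ := by positivity
  linarith

/-- Time increment of the heat kernel on the line: the relative increment `δ / a` is gained at the
price of half of the Gaussian exponent. -/
lemma heat_increment (a δ w : ℝ) (ha : 0 < a) (hδ : 0 ≤ δ) :
    |(Real.sqrt (4 * π * (a + δ)))⁻¹ * Real.exp (-w ^ 2 / (4 * (a + δ))) -
      (Real.sqrt (4 * π * a))⁻¹ * Real.exp (-w ^ 2 / (4 * a))|
      ≤ 3 * (Real.sqrt (4 * π * a))⁻¹ * (δ / a) * Real.exp (-w ^ 2 / (8 * (a + δ))) := by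
  have hb : 0 < a + δ := by linarith
  set A := Real.sqrt (4 * π * a) with hA
  set B := Real.sqrt (4 * π * (a + δ)) with hB
  have hA0 : 0 < A := by positivity
  have hAB : A ≤ B := Real.sqrt_le_sqrt (by
    have := Real.pi_pos
    nlinarith)
  have hB0 : 0 < B := by linarith
  have hA2 : A ^ 2 = 4 * π * a := Real.sq_sqrt (by positivity)
  have hB2 : B ^ 2 = 4 * π * (a + δ) := Real.sq_sqrt (by positivity)
  set y := w ^ 2 / (8 * (a + δ)) with hy
  have hy0 : 0 ≤ y := by positivity
  have eE : -w ^ 2 / (8 * (a + δ)) = -y := by rw [neg_div]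
  have eb : Real.exp (-w ^ 2 / (4 * (a + δ))) = Real.exp (-y) * Real.exp (-y) := by
    rw [← Real.exp_add]; congr 1; rw [hy]; field_simp; ring
  have ea : Real.exp (-w ^ 2 / (4 * a)) =
      Real.exp (-y) * Real.exp (-y) * Real.exp (-(2 * y * (δ / a))) := by
    rw [← Real.exp_add, ← Real.exp_add]; congr 1; rw [hy]; field_simp; ring
  rw [eE, eb, ea]
  set E := Real.exp (-y) with hE
  set D := Real.exp (-(2 * y * (δ / a))) with hD
  have hE0 : 0 < E := Real.exp_pos _
  have hE1 : E ≤ 1 := Real.exp_le_one_iff.2 (by linarith)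
  have hd : 0 ≤ δ / a := by positivity
  have hD1 : D ≤ 1 := Real.exp_le_one_iff.2 (by
    have := mul_nonneg hy0 hd
    linarith)
  have hD2 : 1 - D ≤ 2 * y * (δ / a) := by
    have := Real.add_one_le_exp (-(2 * y * (δ / a)))
    linarith
  have hyE : y * E ≤ 1 := by
    have h := Real.add_one_le_exp y
    have h2 : Real.exp y * E = 1 := by rw [hE, ← Real.exp_add]; simp
    nlinarith
  have hBA : A⁻¹ - B⁻¹ ≤ A⁻¹ * (δ / a) := by
    have h1 : 1 - A / B ≤ δ / a := by
      have h2 : A / B ≤ 1 := (div_le_one hB0).2 hAB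
      have h3 : (A / B) ^ 2 = a / (a + δ) := by
        rw [div_pow, hA2, hB2]
        have := Real.pi_pos
        field_simp
      have h4 : 1 - a / (a + δ) ≤ δ / a := by
        rw [show 1 - a / (a + δ) = δ / (a + δ) by field_simp; ring]
        gcongr
        linarith
      have h5 : 0 ≤ A / B := by positivity
      nlinarith
    calc A⁻¹ - B⁻¹ = A⁻¹ * (1 - A / B) := by field_simp
      _ ≤ _ := by gcongr
  have hBA0 : 0 ≤ A⁻¹ - B⁻¹ := sub_nonneg.2 (by gcongr)
  have hAi : 0 < A⁻¹ := by positivity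
  have hsplit : B⁻¹ * (E * E) - A⁻¹ * (E * E * D) =
      A⁻¹ * (E * E) * (1 - D) - (A⁻¹ - B⁻¹) * (E * E) := by ring
  have p1 : A⁻¹ * (E * E) * (1 - D) ≤ 2 * (A⁻¹ * (δ / a) * E) := by
    calc A⁻¹ * (E * E) * (1 - D) ≤ A⁻¹ * (E * E) * (2 * y * (δ / a)) := by gcongr
      _ = 2 * (A⁻¹ * (δ / a) * E) * (y * E) := by ring
      _ ≤ 2 * (A⁻¹ * (δ / a) * E) * 1 := by gcongr
      _ = _ := by ring
  have p2 : (A⁻¹ - B⁻¹) * (E * E) ≤ A⁻¹ * (δ / a) * E := by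
    calc (A⁻¹ - B⁻¹) * (E * E) ≤ A⁻¹ * (δ / a) * (E * 1) := by gcongr
      _ = _ := by ring
  have p3 : 0 ≤ A⁻¹ * (E * E) * (1 - D) := mul_nonneg (by positivity) (by linarith)
  have p4 : 0 ≤ (A⁻¹ - B⁻¹) * (E * E) := mul_nonneg hBA0 (by positivity)
  have p5 : 0 ≤ A⁻¹ * (δ / a) * E := by positivity
  rw [hsplit, abs_le]
  constructor <;> linarith

/-- Increment bound with quadratic decay in `δ / a`. The condition `δ ≤ a` makes the times `a` and
`a + δ` comparable. -/
lemma increment_le_large (r T a δ x : ℝ) (ha : 0 < a) (hδ : 0 ≤ δ) (hδa : δ ≤ a)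
    (hT : a + δ ≤ T) (hx : 0 ≤ x) :
    ∫ z in Ioi (0:ℝ), |Gr r (a + δ) x z - Gr r a x z| ^ 2
      ≤ 72 * Real.exp (4 * r ^ 2 * T) * (Real.sqrt (4 * π * a))⁻¹ * (δ / a) ^ 2 := by
  have hb : 0 < a + δ := by linarith
  set A := Real.sqrt (4 * π * a) with hA
  have hA0 : 0 < A := by positivity
  have hpt : ∀ z > 0, |Gr r (a + δ) x z - Gr r a x z| ^ 2 ≤ (6 * A⁻¹ * (δ / a)) ^ 2 *
      Real.exp (-2 * r * (x - z) - (x - z) ^ 2 / (4 * (a + δ))) := by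
    intro z hz
    have h1 := heat_increment a δ (x - z) ha hδ
    have h2 := heat_increment a δ (x + z) ha hδ
    rw [← hA] at h1 h2
    have h3 : Real.exp (-(x + z) ^ 2 / (8 * (a + δ))) ≤
        Real.exp (-(x - z) ^ 2 / (8 * (a + δ))) := by
      apply Real.exp_le_exp.2
      apply div_le_div_of_nonneg_right _ (by positivity)
      nlinarith [mul_nonneg hx hz.le]
    have h4 : 3 * A⁻¹ * (δ / a) * Real.exp (-(x + z) ^ 2 / (8 * (a + δ))) ≤
        3 * A⁻¹ * (δ / a) * Real.exp (-(x - z) ^ 2 / (8 * (a + δ))) := by gcongr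
    have h5 : |G (a + δ) x z - G a x z| ≤
        6 * A⁻¹ * (δ / a) * Real.exp (-(x - z) ^ 2 / (8 * (a + δ))) := by
      unfold G
      rw [← hA]
      rw [abs_le] at h1 h2 ⊢
      constructor <;> linarith [h1.1, h1.2, h2.1, h2.2]
    calc |Gr r (a + δ) x z - Gr r a x z| ^ 2
        = Real.exp (-r * (x - z)) ^ 2 * |G (a + δ) x z - G a x z| ^ 2 := by
          unfold Gr
          rw [← mul_sub, abs_mul, abs_of_pos (Real.exp_pos _), mul_pow]
      _ ≤ Real.exp (-r * (x - z)) ^ 2 *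
          (6 * A⁻¹ * (δ / a) * Real.exp (-(x - z) ^ 2 / (8 * (a + δ)))) ^ 2 := by gcongr
      _ = (6 * A⁻¹ * (δ / a)) ^ 2 *
          (Real.exp (-r * (x - z)) ^ 2 * Real.exp (-(x - z) ^ 2 / (8 * (a + δ))) ^ 2) := by
          ring
      _ = _ := by
          congr 1
          rw [← Real.exp_nat_mul, ← Real.exp_nat_mul, ← Real.exp_add]
          congr 1
          push_cast
          field_simp
          ring
  refine (setIntegral_le_of_gaussian r (a + δ) x T _ hb hT (by positivity) _
    (fun z => by positivity) hpt).trans ?_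
  have hB : Real.sqrt (4 * π * (a + δ)) ≤ 2 * A := by
    rw [Real.sqrt_le_left (by positivity), mul_pow, hA, Real.sq_sqrt (by positivity)]
    have := Real.pi_pos
    nlinarith
  calc (6 * A⁻¹ * (δ / a)) ^ 2 *
        (Real.exp (4 * r ^ 2 * T) * Real.sqrt (4 * π * (a + δ)))
      ≤ (6 * A⁻¹ * (δ / a)) ^ 2 * (Real.exp (4 * r ^ 2 * T) * (2 * A)) := by gcongr
    _ = _ := by field_simp; ring

/-- The dominating function `τ^{-q/2} min(1, (δ/τ)^{2q})` on `(0,∞)`, extended by zero. -/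
noncomputable def dom (q δ : ℝ) (τ : ℝ) : ℝ :=
  (Ioc 0 δ).indicator (fun τ => τ ^ (-(q / 2))) τ +
    (Ioi δ).indicator (fun τ => δ ^ (2 * q) * τ ^ (-(5 * q / 2))) τ

lemma dom_nonneg (q δ τ : ℝ) (hδ : 0 < δ) : 0 ≤ dom q δ τ := by
  unfold dom
  apply add_nonneg <;> apply indicator_nonneg
  · intro y hy
    exact Real.rpow_nonneg hy.1.le _
  · intro y hy
    have : 0 < y := hδ.trans hy
    positivity

/-- Integrability at `0` uses `q < 2`, at infinity `q > 2/5`. -/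
lemma dom_integral (q δ : ℝ) (hδ : 0 < δ) (h1 : 1 < q) (h2 : q < 2) :
    Integrable (dom q δ) ∧
      ∫ τ, dom q δ τ = ((1 - q / 2)⁻¹ + (5 * q / 2 - 1)⁻¹) * δ ^ (1 - q / 2) := by
  have i1 : IntegrableOn (fun τ : ℝ => τ ^ (-(q / 2))) (Ioc 0 δ) := by
    rw [← intervalIntegrable_iff_integrableOn_Ioc_of_le hδ.le]
    exact intervalIntegral.intervalIntegrable_rpow' (by linarith)
  have i2 : IntegrableOn (fun τ : ℝ => δ ^ (2 * q) * τ ^ (-(5 * q / 2))) (Ioi δ) :=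
    (integrableOn_Ioi_rpow_of_lt (by linarith) hδ).const_mul _
  have j1 := i1.integrable_indicator measurableSet_Ioc
  have j2 := i2.integrable_indicator measurableSet_Ioi
  refine ⟨j1.add j2, ?_⟩
  unfold dom
  rw [integral_add j1 j2, integral_indicator measurableSet_Ioc,
    integral_indicator measurableSet_Ioi, integral_const_mul,
    integral_Ioi_rpow_of_lt (by linarith) hδ, ← intervalIntegral.integral_of_le hδ.le,
    integral_rpow (Or.inl (by linarith)), Real.zero_rpow (by linarith)]
  have e : δ ^ (1 - q / 2) = δ ^ (2 * q) * δ ^ (-(5 * q / 2) + 1) := by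
    rw [← Real.rpow_add hδ]; congr 1; ring
  have e2 : -(q / 2) + 1 = 1 - q / 2 := by ring
  have e3 : -(5 * q / 2) + 1 = -(5 * q / 2 - 1) := by ring
  rw [e2, sub_zero, add_mul]
  congr 1
  · rw [div_eq_inv_mul]
  · rw [e, e3, neg_div_neg_eq]
    ring

lemma increment_rpow_le (r T q a δ x : ℝ) (ha : 0 < a) (hδ : 0 < δ) (hT : a + δ ≤ T)
    (hx : 0 ≤ x) (hq : 0 < q) :
    (∫ z in Ioi (0:ℝ), |Gr r (a + δ) x z - Gr r a x z| ^ 2) ^ q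
      ≤ (72 * Real.exp (4 * r ^ 2 * T)) ^ q * dom q δ a := by
  set M := 72 * Real.exp (4 * r ^ 2 * T) with hM
  have hM0 : 0 < M := by positivity
  have hF0 : 0 ≤ ∫ z in Ioi (0:ℝ), |Gr r (a + δ) x z - Gr r a x z| ^ 2 :=
    integral_nonneg fun z => by positivity
  have hs : (Real.sqrt (4 * π * a))⁻¹ ≤ a ^ (-(1 / 2 : ℝ)) := by
    rw [Real.rpow_neg ha.le, ← Real.sqrt_eq_rpow]
    gcongr
    nlinarith [Real.pi_gt_three]
  unfold dom
  rcases le_or_gt a δ with h | h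
  · have hF := increment_le_small r T a δ x ha hδ.le hT hx
    rw [← hM] at hF
    rw [indicator_of_mem (show a ∈ Ioc 0 δ from ⟨ha, h⟩),
      indicator_of_notMem (show a ∉ Ioi δ from not_lt.2 h), add_zero]
    calc _ ≤ (M * a ^ (-(1 / 2 : ℝ))) ^ q := by
          gcongr
          exact hF.trans (by gcongr)
      _ = _ := by
          rw [Real.mul_rpow hM0.le (by positivity), ← Real.rpow_mul ha.le]
          congr 2
          ring
  · have hF := increment_le_large r T a δ x ha hδ.le h.le hT hx
    rw [← hM] at hF
    rw [indicator_of_notMem (show a ∉ Ioc 0 δ from fun h' => absurd h'.2 (not_le.2 h)),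
      indicator_of_mem (show a ∈ Ioi δ from h), zero_add]
    have e : a ^ (-(1 / 2 : ℝ)) * (δ / a) ^ 2 = δ ^ (2 : ℝ) * a ^ (-(5 / 2 : ℝ)) := by
      have : (-(5 / 2 : ℝ)) = -(1 / 2) - 2 := by norm_num
      rw [this, Real.rpow_sub ha, Real.rpow_two, Real.rpow_two]
      field_simp
    calc _ ≤ (M * (δ ^ (2 : ℝ) * a ^ (-(5 / 2 : ℝ)))) ^ q := by
          gcongr
          rw [← e, ← mul_assoc]
          exact hF.trans (by gcongr)
      _ = _ := by
          rw [Real.mul_rpow hM0.le (by positivity),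
            Real.mul_rpow (x := δ ^ (2 : ℝ)) (by positivity) (by positivity),
            ← Real.rpow_mul ha.le, ← Real.rpow_mul hδ.le]
          congr 3
          ring

/-- Lemma A.1 (ii) of Hambly–Kalsi: time-increment bound for `G_r`. -/
theorem stmt_1 (r T p : ℝ) (hT : 0 < T) (hp : 4 < p) :
    ∃ C > (0:ℝ), ∀ s t : ℝ, 0 ≤ s → s ≤ t → t ≤ T → ∀ x ≥ (0:ℝ),
      (∫ u in Ioc (0:ℝ) s,
          (∫ z in Ioi (0:ℝ), |Gr r (t - u) x z - Gr r (s - u) x z| ^ 2) ^ (p / (p - 2)))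
          ^ ((p - 2) / 2)
        ≤ C * |t - s| ^ ((p - 4) / 4) := by
  have hp2 : 0 < p - 2 := by linarith
  set q := p / (p - 2) with hq
  have hq1 : 1 < q := by rw [hq, lt_div_iff₀ hp2]; linarith
  have hq2 : q < 2 := by rw [hq, div_lt_iff₀ hp2]; linarith
  set K := (72 * Real.exp (4 * r ^ 2 * T)) ^ q * ((1 - q / 2)⁻¹ + (5 * q / 2 - 1)⁻¹) with hK
  have hK0 : 0 < K := by
    have h1 : 0 < 1 - q / 2 := by linarith
    have h2 : 0 < 5 * q / 2 - 1 := by linarith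
    positivity
  refine ⟨K ^ ((p - 2) / 2), by positivity, ?_⟩
  intro s t hs hst htT x hx
  rcases hst.eq_or_lt with rfl | hlt
  · have hq0 : q ≠ 0 := by linarith
    have hp0 : (p - 2) / 2 ≠ 0 := by positivity
    simp only [sub_self, abs_zero, ne_eq, OfNat.ofNat_ne_zero, not_false_eq_true, zero_pow,
      integral_zero, Real.zero_rpow hq0, Real.zero_rpow hp0]
    positivity
  have hδ : 0 < t - s := by linarith
  obtain ⟨hdi, hdv⟩ := dom_integral q (t - s) hδ hq1 hq2
  have hdi' : Integrable (fun u => (72 * Real.exp (4 * r ^ 2 * T)) ^ q * dom q (t - s) (s - u)) :=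
    (hdi.comp_sub_left s).const_mul _
  have main : ∫ u in Ioc (0:ℝ) s,
      (∫ z in Ioi (0:ℝ), |Gr r (t - u) x z - Gr r (s - u) x z| ^ 2) ^ q
      ≤ K * (t - s) ^ (1 - q / 2) := by
    calc _ ≤ ∫ u in Ioc (0:ℝ) s, (72 * Real.exp (4 * r ^ 2 * T)) ^ q * dom q (t - s) (s - u) := by
          apply integral_mono_of_nonneg _ hdi'.integrableOn
          · -- At the endpoint `u = s` the kernel has the junk time `0`; it is a null set.
            filter_upwards [ae_restrict_mem measurableSet_Ioc,
              ae_restrict_of_ae (Measure.ae_ne volume s)] with u hu hne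
            have ha : 0 < s - u := sub_pos.2 (lt_of_le_of_ne hu.2 hne)
            have e : t - u = (s - u) + (t - s) := by ring
            simp only [e]
            exact increment_rpow_le r T q (s - u) (t - s) x ha hδ (by linarith [hu.1]) hx
              (by linarith)
          · exact Eventually.of_forall fun u =>
              Real.rpow_nonneg (integral_nonneg fun z => by positivity) _
      _ ≤ ∫ u, (72 * Real.exp (4 * r ^ 2 * T)) ^ q * dom q (t - s) (s - u) :=
          setIntegral_le_integral hdi' (Eventually.of_forall fun u =>
            mul_nonneg (by positivity) (dom_nonneg _ _ _ hδ))
      _ = _ := by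
          rw [integral_const_mul, integral_sub_left_eq_self (dom q (t - s)), hdv, hK]
          ring
  calc _ ≤ (K * (t - s) ^ (1 - q / 2)) ^ ((p - 2) / 2) := by
        gcongr
    _ = _ := by
        rw [Real.mul_rpow hK0.le (by positivity), ← Real.rpow_mul hδ.le, abs_of_pos hδ]
        congr 2
        rw [hq]
        field_simp
        ring
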